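/- arXiv:2301.12567 — 3 statements merged into one kernel-verified Lean document; each statement's English description precedes it below -/
import Mathlib

section
/- (Absence of fourth-order resonances.) Let m ≥ -1/2, ω_j := √(j⁴ + m j²) for integers j ≥ 1, and μ := min{2√(1+m), (3/2)√(4+m)}. Then for all integers i, j ≥ 1 and all a, b ∈ {−2, 0, 2} such that either (i ≠ j and (a,b) ≠ (0,0)) or (i = j and a + b ≠ 0), one has |a·ω_i + b·ω_j| ≥ μ. -/
/-!
Write `ω_j = j √(j² + m)`. Every `ω_j` is at least `ω_1 = √(1 + m)`, so a combination whose
nonzero coefficients all have the same sign has modulus at least `2 √(1 + m)`. For opposite signs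
and `i < j`, `ω_i ≤ (j - 1) √(j² + m)`, hence `ω_j - ω_i ≥ √(j² + m) ≥ √(4 + m)`, which gives
`2 (ω_j - ω_i) ≥ 2 √(4 + m) ≥ (3/2) √(4 + m)`.
-/

/-- Linear frequencies `ω_j = √(j⁴ + m j²)` of the hinged beam. -/
noncomputable def beamOmega (m : ℝ) (j : ℕ) : ℝ :=
  Real.sqrt ((j : ℝ) ^ 4 + m * (j : ℝ) ^ 2)

lemma beamOmega_eq (m : ℝ) (j : ℕ) :
    beamOmega m j = j * Real.sqrt ((j : ℝ) ^ 2 + m) := by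
  have h : (j : ℝ) ^ 4 + m * (j : ℝ) ^ 2 = (j : ℝ) ^ 2 * ((j : ℝ) ^ 2 + m) := by ring
  rw [beamOmega, h, Real.sqrt_mul (sq_nonneg _), Real.sqrt_sq (Nat.cast_nonneg j)]

lemma sqrt_one_add_le_beamOmega (m : ℝ) (j : ℕ) (hj : 1 ≤ j) :
    Real.sqrt (1 + m) ≤ beamOmega m j := by
  have h1 : (1 : ℝ) ≤ j := by exact_mod_cast hj
  have h2 : Real.sqrt (1 + m) ≤ Real.sqrt ((j : ℝ) ^ 2 + m) :=
    Real.sqrt_le_sqrt (by nlinarith)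
  rw [beamOmega_eq]
  nlinarith [Real.sqrt_nonneg ((j : ℝ) ^ 2 + m)]

/-- Spectral gap: distinct frequencies differ by at least `√(4 + m)`. -/
lemma sqrt_four_add_le_sub (m : ℝ) (i j : ℕ) (hi : 1 ≤ i) (hij : i < j) :
    Real.sqrt (4 + m) ≤ beamOmega m j - beamOmega m i := by
  have hi' : (1 : ℝ) ≤ i := by exact_mod_cast hi
  have hij' : (i : ℝ) + 1 ≤ j := by exact_mod_cast hij
  have h1 : Real.sqrt (4 + m) ≤ Real.sqrt ((j : ℝ) ^ 2 + m) :=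
    Real.sqrt_le_sqrt (by nlinarith)
  have h2 : Real.sqrt ((i : ℝ) ^ 2 + m) ≤ Real.sqrt ((j : ℝ) ^ 2 + m) :=
    Real.sqrt_le_sqrt (by nlinarith)
  have h3 := mul_le_mul_of_nonneg_left h2 (by linarith : (0 : ℝ) ≤ i)
  have h4 := mul_le_mul_of_nonneg_right hij' (Real.sqrt_nonneg ((j : ℝ) ^ 2 + m))
  rw [beamOmega_eq, beamOmega_eq]
  linarith

/-- **Absence of fourth-order resonances.** -/
theorem no_fourth_order_resonances
    (m : ℝ) (hm : -(1/2) ≤ m)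
    (μ : ℝ) (hμ : μ = min (2 * Real.sqrt (1 + m)) (3/2 * Real.sqrt (4 + m)))
    (i j : ℕ) (hi : 1 ≤ i) (hj : 1 ≤ j)
    (a b : ℝ) (ha : a ∈ ({-2, 0, 2} : Set ℝ)) (hb : b ∈ ({-2, 0, 2} : Set ℝ))
    (hres : (i ≠ j ∧ (a, b) ≠ (0, 0)) ∨ (i = j ∧ a + b ≠ 0)) :
    μ ≤ |a * beamOmega m i + b * beamOmega m j| := by
  have hμ1 : μ ≤ 2 * Real.sqrt (1 + m) := hμ ▸ min_le_left _ _
  have hμ2 : μ ≤ 3/2 * Real.sqrt (4 + m) := hμ ▸ min_le_right _ _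
  have s1 := Real.sqrt_nonneg (1 + m)
  have s4 := Real.sqrt_nonneg (4 + m)
  have wi := sqrt_one_add_le_beamOmega m i hi
  have wj := sqrt_one_add_le_beamOmega m j hj
  have hne : ¬ (a = 0 ∧ b = 0) := by
    rintro ⟨rfl, rfl⟩
    simp at hres
  -- Opposite signs can only occur for distinct indices, where the spectral gap applies.
  have hgap : a + b = 0 → μ ≤ 2 * (beamOmega m j - beamOmega m i) ∨
      μ ≤ 2 * (beamOmega m i - beamOmega m j) := by
    intro hab
    have hij : i ≠ j := by
      rcases hres with h | h
      · exact h.1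
      · exact absurd hab h.2
    rcases lt_or_gt_of_ne hij with h | h
    · left; linarith [sqrt_four_add_le_sub m i j hi h]
    · right; linarith [sqrt_four_add_le_sub m j i hj h]
  simp only [Set.mem_insert_iff, Set.mem_singleton_iff] at ha hb
  rw [le_abs]
  rcases ha with rfl | rfl | rfl <;> rcases hb with rfl | rfl | rfl
  · right; linarith
  · right; linarith
  · rcases hgap (by norm_num) with h | h
    · left; linarith
    · right; linarith
  · right; linarith
  · exact absurd ⟨rfl, rfl⟩ hne
  · left; linarith
  · rcases hgap (by norm_num) with h | h
    · right; linarith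
    · left; linarith
  · left; linarith
  · left; linarith
end

section
/- Let m ≥ -1/2 and ω_j := √(j⁴ + m j²) for integers j ≥ 1. Then for all integers i > j ≥ 1, one has 2(ω_i − ω_j) ≥ (3/2)·√(4+m). -/
theorem beamOmega_eq_mul_sqrt (m : ℝ) (k : ℕ) :
    beamOmega m k = k * Real.sqrt ((k : ℝ) ^ 2 + m) := by
  have h : (k : ℝ) ^ 4 + m * (k : ℝ) ^ 2 = (k : ℝ) ^ 2 * ((k : ℝ) ^ 2 + m) := by ring
  rw [beamOmega, h, Real.sqrt_mul (by positivity), Real.sqrt_sq (by positivity)]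

/-- The gap estimate `2(ω_i - ω_j) ≥ (3/2)√(4+m)` for `i > j ≥ 1`. -/
theorem beam_frequency_gap
    (m : ℝ) (hm : -(1/2) ≤ m)
    (i j : ℕ) (hj : 1 ≤ j) (hij : j < i) :
    3/2 * Real.sqrt (4 + m) ≤ 2 * (beamOmega m i - beamOmega m j) := by
  have hij' : (j : ℝ) + 1 ≤ i := by exact_mod_cast hij
  have hj' : (1 : ℝ) ≤ j := by exact_mod_cast hj
  have h1 : Real.sqrt ((j : ℝ) ^ 2 + m) ≤ Real.sqrt ((i : ℝ) ^ 2 + m) :=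
    Real.sqrt_le_sqrt (by nlinarith)
  have h2 : Real.sqrt (4 + m) ≤ Real.sqrt ((i : ℝ) ^ 2 + m) :=
    Real.sqrt_le_sqrt (by nlinarith)
  have h3 := Real.sqrt_nonneg (4 + m)
  have h4 := Real.sqrt_nonneg ((i : ℝ) ^ 2 + m)
  rw [beamOmega_eq_mul_sqrt, beamOmega_eq_mul_sqrt]
  have h5 : (j : ℝ) * Real.sqrt ((j : ℝ) ^ 2 + m) ≤ j * Real.sqrt ((i : ℝ) ^ 2 + m) := by gcongr
  have h6 : ((j : ℝ) + 1) * Real.sqrt ((i : ℝ) ^ 2 + m) ≤ i * Real.sqrt ((i : ℝ) ^ 2 + m) := by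
    gcongr
  linarith
end

section
/- (Absence of sixth-order resonances.) Let −1/2 ≤ m ≤ 1 and ω_j := √(j⁴ + m j²) for integers j ≥ 1. Then for all integers i, j, k ≥ 1 and all a, b, c ∈ {−2, 0, 2}, if a·ω_i + b·ω_j + c·ω_k ≠ 0 then |a·ω_i + b·ω_j + c·ω_k| ≥ (7/8)·|m|. -/
lemma beamOmega_le {m : ℝ} (hm : -(1/2) ≤ m) {j : ℕ} (hj : 1 ≤ j) :
    beamOmega m j ≤ (j : ℝ) ^ 2 + m / 2 := by
  have h1 : (1 : ℝ) ≤ j := by exact_mod_cast hj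
  refine Real.sqrt_le_iff.mpr ⟨by nlinarith, ?_⟩
  nlinarith [sq_nonneg m]

/-- The hypothesis is `(j² + c m)² ≤ j⁴ + m j²`, rearranged. -/
lemma beamOmega_ge (m c : ℝ) (j : ℕ)
    (h : 0 ≤ m * ((1 - 2 * c) * (j : ℝ) ^ 2 - c ^ 2 * m)) :
    (j : ℝ) ^ 2 + c * m ≤ beamOmega m j := by
  refine Real.le_sqrt_of_sq_le ?_
  nlinarith

lemma beamOmega_ge_pos {m : ℝ} (h0 : 0 ≤ m) (hm1 : m ≤ 1) {j : ℕ} (hj : 1 ≤ j) :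
    (j : ℝ) ^ 2 + 2 / 5 * m ≤ beamOmega m j := by
  have h1 : (1 : ℝ) ≤ j := by exact_mod_cast hj
  exact beamOmega_ge _ _ _ (mul_nonneg h0 (by nlinarith))

lemma beamOmega_ge_pos_two {m : ℝ} (h0 : 0 ≤ m) (hm1 : m ≤ 1) {j : ℕ} (hj : 2 ≤ j) :
    (j : ℝ) ^ 2 + 47 / 100 * m ≤ beamOmega m j := by
  have h1 : (2 : ℝ) ≤ j := by exact_mod_cast hj
  exact beamOmega_ge _ _ _ (mul_nonneg h0 (by nlinarith))

lemma beamOmega_ge_pos_three {m : ℝ} (h0 : 0 ≤ m) (hm1 : m ≤ 1) {j : ℕ} (hj : 3 ≤ j) :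
    (j : ℝ) ^ 2 + 12 / 25 * m ≤ beamOmega m j := by
  have h1 : (3 : ℝ) ≤ j := by exact_mod_cast hj
  exact beamOmega_ge _ _ _ (mul_nonneg h0 (by nlinarith))

lemma beamOmega_ge_neg {m : ℝ} (h0 : m ≤ 0) (hm : -(1/2) ≤ m) {j : ℕ} (hj : 1 ≤ j) :
    (j : ℝ) ^ 2 + 3 / 5 * m ≤ beamOmega m j := by
  have h1 : (1 : ℝ) ≤ j := by exact_mod_cast hj
  exact beamOmega_ge _ _ _ (mul_nonneg_of_nonpos_of_nonpos h0 (by nlinarith))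

lemma beamOmega_ge_neg_three {m : ℝ} (h0 : m ≤ 0) (hm : -(1/2) ≤ m) {j : ℕ} (hj : 3 ≤ j) :
    (j : ℝ) ^ 2 + 53 / 100 * m ≤ beamOmega m j := by
  have h1 : (3 : ℝ) ≤ j := by exact_mod_cast hj
  exact beamOmega_ge _ _ _ (mul_nonneg_of_nonpos_of_nonpos h0 (by nlinarith))

lemma single_bound {m : ℝ} (hm : -(1/2) ≤ m) (hm1 : m ≤ 1) {j : ℕ} (hj : 1 ≤ j) :
    7 / 16 * |m| ≤ beamOmega m j := by
  have h1 : (1 : ℝ) ≤ (j : ℝ) ^ 2 := by exact_mod_cast Nat.one_le_pow 2 j hj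
  rcases le_total 0 m with h0 | h0
  · rw [abs_of_nonneg h0]
    linarith [beamOmega_ge_pos h0 hm1 hj]
  · rw [abs_of_nonpos h0]
    linarith [beamOmega_ge_neg h0 hm hj]

lemma pair_bound_of_lt {m : ℝ} (hm : -(1/2) ≤ m) (hm1 : m ≤ 1) {i j : ℕ}
    (hi : 1 ≤ i) (hij : i < j) :
    7 / 16 * |m| ≤ beamOmega m j - beamOmega m i := by
  have hj : 1 ≤ j := by omega
  have h1 : (i : ℝ) ^ 2 + 3 ≤ (j : ℝ) ^ 2 := by
    have : i ^ 2 + 3 ≤ j ^ 2 := by nlinarith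
    exact_mod_cast this
  have hu := beamOmega_le hm hi
  rcases le_total 0 m with h0 | h0
  · rw [abs_of_nonneg h0]
    linarith [beamOmega_ge_pos h0 hm1 hj]
  · rw [abs_of_nonpos h0]
    linarith [beamOmega_ge_neg h0 hm hj]

lemma pair_bound {m : ℝ} (hm : -(1/2) ≤ m) (hm1 : m ≤ 1) {i j : ℕ}
    (hi : 1 ≤ i) (hj : 1 ≤ j) (hne : beamOmega m i - beamOmega m j ≠ 0) :
    7 / 16 * |m| ≤ |beamOmega m i - beamOmega m j| := by
  rcases lt_trichotomy i j with h | h | h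
  · rw [abs_sub_comm]
    exact (pair_bound_of_lt hm hm1 hi h).trans (le_abs_self _)
  · exact absurd (by rw [h, sub_self]) hne
  · exact (pair_bound_of_lt hm hm1 hj h).trans (le_abs_self _)

lemma three_le_of_pythagorean {i j k : ℕ} (hi : 1 ≤ i) (hj : 1 ≤ j)
    (h : i ^ 2 + j ^ 2 = k ^ 2) : 3 ≤ i := by
  by_contra hlt
  have hjk : j + 1 ≤ k := by
    by_contra hc
    have : k ≤ j := by omega
    nlinarith
  -- `2 j + 1 ≤ k² - j² = i² ≤ 4` leaves only `j = 1`
  have hj1 : j ≤ 1 := by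
    have : i ≤ 2 := by omega
    nlinarith
  have hk : k ≤ 2 := by nlinarith
  interval_cases i <;> interval_cases j <;> interval_cases k <;> omega

lemma triple_bound {m : ℝ} (hm : -(1/2) ≤ m) (hm1 : m ≤ 1) {i j k : ℕ}
    (hi : 1 ≤ i) (hj : 1 ≤ j) (hk : 1 ≤ k) :
    7 / 16 * |m| ≤ |beamOmega m i + beamOmega m j - beamOmega m k| := by
  have ui := beamOmega_le hm hi
  have uj := beamOmega_le hm hj
  have uk := beamOmega_le hm hk
  rcases lt_trichotomy (i ^ 2 + j ^ 2) (k ^ 2) with h | h | h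
  · have hN : (i : ℝ) ^ 2 + (j : ℝ) ^ 2 + 1 ≤ (k : ℝ) ^ 2 := by exact_mod_cast h
    have hk2 : 2 ≤ k := by nlinarith
    rw [abs_sub_comm]
    refine le_trans ?_ (le_abs_self _)
    rcases le_total 0 m with h0 | h0
    · rw [abs_of_nonneg h0]
      linarith [beamOmega_ge_pos_two h0 hm1 hk2]
    · rw [abs_of_nonpos h0]
      linarith [beamOmega_ge_neg h0 hm hk]
  · have hN : (i : ℝ) ^ 2 + (j : ℝ) ^ 2 = (k : ℝ) ^ 2 := by exact_mod_cast h
    have hi3 : 3 ≤ i := three_le_of_pythagorean hi hj h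
    have hj3 : 3 ≤ j := three_le_of_pythagorean hj hi (by rw [add_comm]; exact h)
    have hk3 : 3 ≤ k := by nlinarith
    rcases le_total 0 m with h0 | h0
    · refine le_trans ?_ (le_abs_self _)
      rw [abs_of_nonneg h0]
      linarith [beamOmega_ge_pos_three h0 hm1 hi3, beamOmega_ge_pos_three h0 hm1 hj3]
    · refine le_trans ?_ (neg_le_abs _)
      rw [abs_of_nonpos h0]
      linarith [beamOmega_ge_neg_three h0 hm hk3]
  · have hN : (k : ℝ) ^ 2 + 1 ≤ (i : ℝ) ^ 2 + (j : ℝ) ^ 2 := by exact_mod_cast h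
    refine le_trans ?_ (le_abs_self _)
    rcases le_total 0 m with h0 | h0
    · rw [abs_of_nonneg h0]
      linarith [beamOmega_ge_pos h0 hm1 hi, beamOmega_ge_pos h0 hm1 hj]
    · rw [abs_of_nonpos h0]
      linarith [beamOmega_ge_neg h0 hm hi, beamOmega_ge_neg h0 hm hj]

/-- The reduction from the 27 sign patterns to single, pair and triple combinations, for arbitrary
reals `x, y, z` in place of the frequencies and `t` in place of `7|m|/16`. -/
lemma sign_patterns {x y z t : ℝ} (ht : 0 ≤ t) (hx : t ≤ x) (hy : t ≤ y) (hz : t ≤ z)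
    (hxy : x - y ≠ 0 → t ≤ |x - y|) (hxz : x - z ≠ 0 → t ≤ |x - z|)
    (hyz : y - z ≠ 0 → t ≤ |y - z|)
    (h1 : t ≤ |x + y - z|) (h2 : t ≤ |x + z - y|) (h3 : t ≤ |y + z - x|)
    {a b c : ℝ} (ha : a ∈ ({-2, 0, 2} : Set ℝ)) (hb : b ∈ ({-2, 0, 2} : Set ℝ))
    (hc : c ∈ ({-2, 0, 2} : Set ℝ)) (hres : a * x + b * y + c * z ≠ 0) :
    2 * t ≤ |a * x + b * y + c * z| := by
  have hxy' : x = y ∨ t ≤ |x - y| := by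
    by_cases h : x - y = 0
    · exact Or.inl (sub_eq_zero.mp h)
    · exact Or.inr (hxy h)
  have hxz' : x = z ∨ t ≤ |x - z| := by
    by_cases h : x - z = 0
    · exact Or.inl (sub_eq_zero.mp h)
    · exact Or.inr (hxz h)
  have hyz' : y = z ∨ t ≤ |y - z| := by
    by_cases h : y - z = 0
    · exact Or.inl (sub_eq_zero.mp h)
    · exact Or.inr (hyz h)
  clear hxy hxz hyz
  simp only [Set.mem_insert_iff, Set.mem_singleton_iff] at ha hb hc
  rw [le_abs] at *
  rcases ha with rfl | rfl | rfl <;> rcases hb with rfl | rfl | rfl <;>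
    rcases hc with rfl | rfl | rfl <;> grind

/-- **Absence of sixth-order resonances.** -/
theorem no_sixth_order_resonances
    (m : ℝ) (hm : -(1/2) ≤ m) (hm1 : m ≤ 1)
    (i j k : ℕ) (hi : 1 ≤ i) (hj : 1 ≤ j) (hk : 1 ≤ k)
    (a b c : ℝ) (ha : a ∈ ({-2, 0, 2} : Set ℝ)) (hb : b ∈ ({-2, 0, 2} : Set ℝ))
    (hc : c ∈ ({-2, 0, 2} : Set ℝ))
    (hres : a * beamOmega m i + b * beamOmega m j + c * beamOmega m k ≠ 0) :
    7/8 * |m| ≤ |a * beamOmega m i + b * beamOmega m j + c * beamOmega m k| := by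
  have h := sign_patterns (t := 7 / 16 * |m|) (by positivity)
    (single_bound hm hm1 hi) (single_bound hm hm1 hj) (single_bound hm hm1 hk)
    (pair_bound hm hm1 hi hj) (pair_bound hm hm1 hi hk) (pair_bound hm hm1 hj hk)
    (triple_bound hm hm1 hi hj hk) (triple_bound hm hm1 hi hk hj) (triple_bound hm hm1 hj hk hi)
    ha hb hc hres
  linarith
end
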